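/- Let 𝕄 = ⟨M, 𝒞⟩ be a countable transitive model of GB⁻. If ℙ is a notion of class forcing for 𝕄 that is approachable by projections, then ℙ has bounded names. -/

import Mathlib

noncomputable section

namespace CF

open scoped ZFSet

attribute [local instance] Classical.propDecidable

/-! ### First-order formulas of the language of set theory -/

/-- First-order `∈`-formulas with variables indexed by `ℕ`. -/
inductive EFormula : Type
  | mem : ℕ → ℕ → EFormula
  | eq : ℕ → ℕ → EFormula
  | not : EFormula → EFormula
  | or : EFormula → EFormula → EFormula
  | ex : ℕ → EFormula → EFormula

/-- Satisfaction of an `∈`-formula in the structure `⟨D, ∈⟩` under assignment `v`. -/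
def EFormula.Sat (D : Set ZFSet) (v : ℕ → ZFSet) : EFormula → Prop
  | .mem i j => v i ∈ v j
  | .eq i j => v i = v j
  | .not φ => ¬ EFormula.Sat D v φ
  | .or φ ψ => EFormula.Sat D v φ ∨ EFormula.Sat D v ψ
  | .ex i φ => ∃ x ∈ D, EFormula.Sat D (Function.update v i x) φ

/-- All variables occurring in the formula are `< m`. -/
def EFormula.VarsLt (m : ℕ) : EFormula → Prop
  | .mem i j => i < m ∧ j < m
  | .eq i j => i < m ∧ j < m
  | .not φ => EFormula.VarsLt m φ
  | .or φ ψ => EFormula.VarsLt m φ ∧ EFormula.VarsLt m ψ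
  | .ex i φ => i < m ∧ EFormula.VarsLt m φ

/-- First-order formulas of the two-sorted language of `GB⁻`: set variables indexed by `ℕ`,
class parameters indexed by `ℕ`, and only set quantifiers. -/
inductive GBFormula : Type
  | mem : ℕ → ℕ → GBFormula
  | eq : ℕ → ℕ → GBFormula
  | cls : ℕ → ℕ → GBFormula    -- `vᵢ ∈ C_j`
  | not : GBFormula → GBFormula
  | or : GBFormula → GBFormula → GBFormula
  | ex : ℕ → GBFormula → GBFormula

/-- Satisfaction of a `GBFormula` with set quantifiers ranging over `Mset`,
class parameters `Cs` and set assignment `v`. -/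
def GBFormula.Sat (Mset : Set ZFSet) (Cs : ℕ → Set ZFSet) (v : ℕ → ZFSet) : GBFormula → Prop
  | .mem i j => v i ∈ v j
  | .eq i j => v i = v j
  | .cls i j => v i ∈ Cs j
  | .not φ => ¬ GBFormula.Sat Mset Cs v φ
  | .or φ ψ => GBFormula.Sat Mset Cs v φ ∨ GBFormula.Sat Mset Cs v ψ
  | .ex i φ => ∃ x ∈ Mset, GBFormula.Sat Mset Cs (Function.update v i x) φ

/-! ### Countable transitive models of GB⁻ -/

/-- A countable transitive second-order model `𝕄 = ⟨M, 𝒞⟩` of `GB⁻`: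
`M` is transitive and countable, classes are subsets of `M`, sets are classes, and the axioms
of `GB⁻` hold (extensionality and foundation are automatic for `ZFSet`; the set axioms of `ZF⁻`
with separation and collection allowing class parameters, together with first-order class
comprehension, are listed). -/
structure GBModel where
  M : Set ZFSet
  Cls : Set (Set ZFSet)
  countable_M : M.Countable
  countable_Cls : Cls.Countable
  transitive : ∀ x ∈ M, ∀ y : ZFSet, y ∈ x → y ∈ M
  sets_are_classes : ∀ x ∈ M, x.toSet ∈ Cls
  classes_sub : ∀ C ∈ Cls, C ⊆ M
  empty_mem : (∅ : ZFSet) ∈ M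
  pair_mem : ∀ x ∈ M, ∀ y ∈ M, ({x, y} : ZFSet) ∈ M
  sUnion_mem : ∀ x ∈ M, (⋃₀ x : ZFSet) ∈ M
  omega_mem : ZFSet.omega ∈ M
  comprehension : ∀ (φ : GBFormula) (v : ℕ → ZFSet) (Cs : ℕ → Set ZFSet),
    (∀ n, v n ∈ M) → (∀ n, Cs n ∈ Cls) →
    {x : ZFSet | x ∈ M ∧ GBFormula.Sat M Cs (Function.update v 0 x) φ} ∈ Cls
  separation : ∀ C ∈ Cls, ∀ a ∈ M, ∃ b ∈ M, ∀ x : ZFSet, x ∈ b ↔ x ∈ a ∧ x ∈ C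
  collection : ∀ C ∈ Cls, ∀ a ∈ M,
    (∀ x : ZFSet, x ∈ a → ∃ y ∈ M, x.pair y ∈ C) →
    ∃ b ∈ M, ∀ x : ZFSet, x ∈ a → ∃ y : ZFSet, y ∈ b ∧ x.pair y ∈ C

/-- A notion of class forcing `ℙ = ⟨P, ≤_ℙ⟩` for `𝕄`: a partial order (with maximal element
`𝟙_ℙ`) whose domain and order relation are classes of `𝕄`. -/
structure ClassForcing (𝕄 : GBModel) where
  P : Set ZFSet
  le : ZFSet → ZFSet → Prop
  one : ZFSet
  one_mem : one ∈ P
  le_one : ∀ p ∈ P, le p one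
  le_refl : ∀ p ∈ P, le p p
  le_trans : ∀ p q r : ZFSet, le p q → le q r → le p r
  P_cls : P ∈ 𝕄.Cls
  le_cls : {x : ZFSet | ∃ p ∈ P, ∃ q ∈ P, le p q ∧ x = p.pair q} ∈ 𝕄.Cls

/-! ### Names and their evaluation -/

/-- Auxiliary rank-bounded version of `IsName`. -/
def IsNameAux (S : Set ZFSet) (o : Ordinal) (σ : ZFSet) : Prop :=
  ∀ x ∈ σ.toSet, ∃ τ p : ZFSet, x = τ.pair p ∧ p ∈ S ∧
    ∃ _h : τ.rank < o, IsNameAux S τ.rank τ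
termination_by o

/-- `σ` is a `ℙ`-name (for the forcing with conditions `S`): every element of `σ` is a pair
`⟨τ, p⟩` with `τ` a `ℙ`-name and `p ∈ S`. -/
def IsName (S : Set ZFSet) (σ : ZFSet) : Prop := IsNameAux S σ.rank σ

/-- Image of a ZFSet under an arbitrary function (using choice for definability). -/
def zimage (f : ZFSet → ZFSet) (x : ZFSet) : ZFSet :=
  @ZFSet.image f (Classical.allZFSetDefinable _) x

/-- Auxiliary rank-bounded version of the evaluation `σ^G` of a name by a filter. -/
def nameEvalAux (G : Set ZFSet) (o : Ordinal) (σ : ZFSet) : ZFSet :=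
  zimage (fun τ => if h : τ.rank < o then nameEvalAux G τ.rank τ else ∅)
    (ZFSet.sep (fun τ => ∃ p, p ∈ G ∧ τ.pair p ∈ σ) (⋃₀ ⋃₀ σ))
termination_by o
decreasing_by exact h

/-- The evaluation `σ^G = {τ^G | ∃ p ∈ G, ⟨τ, p⟩ ∈ σ}` of a name `σ` by a filter `G`. -/
def nameEval (G : Set ZFSet) (σ : ZFSet) : ZFSet := nameEvalAux G σ.rank σ

/-- Auxiliary rank-bounded version of `nameTC`. -/
def nameTCAux (o : Ordinal) (σ : ZFSet) : Set ZFSet :=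
  {x | ∃ τ p : ZFSet, τ.pair p ∈ σ ∧ (x = p ∨ ∃ _h : τ.rank < o, x ∈ nameTCAux τ.rank τ)}
termination_by o

/-- The set `tc(σ) = ⋃ {{p} ∪ tc(τ) | ⟨τ,p⟩ ∈ σ}` of conditions appearing in the transitive
closure of the name `σ`. -/
def nameTC (σ : ZFSet) : Set ZFSet := nameTCAux σ.rank σ

/-! ### Filters, genericity, generic extensions -/

/-- `G` is a filter on the partial order with domain `S` and ordering `le`. -/
def IsFilterOn (S : Set ZFSet) (le : ZFSet → ZFSet → Prop) (G : Set ZFSet) : Prop :=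
  G ⊆ S ∧ G.Nonempty ∧ (∀ p ∈ G, ∀ q ∈ S, le p q → q ∈ G) ∧
    ∀ p ∈ G, ∀ q ∈ G, ∃ r ∈ G, le r p ∧ le r q

/-- `D` is a dense subclass of the partial order `⟨S, le⟩`. -/
def DenseIn (S : Set ZFSet) (le : ZFSet → ZFSet → Prop) (D : Set ZFSet) : Prop :=
  D ⊆ S ∧ ∀ p ∈ S, ∃ q ∈ D, le q p

/-- `G` is a generic filter on `⟨S, le⟩` over `𝕄`: a filter meeting every dense subclass
of `⟨S, le⟩` lying in `𝒞`. -/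
def IsGeneric (𝕄 : GBModel) (S : Set ZFSet) (le : ZFSet → ZFSet → Prop) (G : Set ZFSet) : Prop :=
  IsFilterOn S le G ∧ ∀ D ∈ 𝕄.Cls, DenseIn S le D → (G ∩ D).Nonempty

/-- The generic extension `M[G] = {σ^G | σ ∈ M a name for the forcing with domain S}`. -/
def MGen (𝕄 : GBModel) (S : Set ZFSet) (G : Set ZFSet) : Set ZFSet :=
  {x | ∃ σ : ZFSet, σ ∈ 𝕄.M ∧ IsName S σ ∧ nameEval G σ = x}

/-! ### Compatibility, the set decision property -/

/-- `p` and `q` are compatible in `⟨S, le⟩`. -/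
def Compat (S : Set ZFSet) (le : ZFSet → ZFSet → Prop) (p q : ZFSet) : Prop :=
  ∃ r ∈ S, le r p ∧ le r q

/-- `p ≤* q` : every extension of `p` is compatible with `q`. -/
def leStar (S : Set ZFSet) (le : ZFSet → ZFSet → Prop) (p q : ZFSet) : Prop :=
  ∀ r ∈ S, le r p → Compat S le r q

/-- `p` decides the set of conditions `A`: for every `a ∈ A`, either `p ≤* a` or `p ⊥ a`. -/
def Decides (S : Set ZFSet) (le : ZFSet → ZFSet → Prop) (p A : ZFSet) : Prop :=
  ∀ a : ZFSet, a ∈ A → leStar S le p a ∨ ¬ Compat S le p a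

/-- The set decision property: every set of conditions in `M` is decided densely. -/
def SetDecisionProperty (𝕄 : GBModel) (F : ClassForcing 𝕄) : Prop :=
  ∀ p ∈ F.P, ∀ A : ZFSet, A ∈ 𝕄.M → (∀ a : ZFSet, a ∈ A → a ∈ F.P) →
    ∃ q ∈ F.P, F.le q p ∧ Decides F.P F.le q A

/-! ### The forcing theorem -/

/-- Encode a finite list of sets as a single set by iterated Kuratowski pairing. -/
def listEncode : List ZFSet → ZFSet
  | [] => ∅
  | a :: l => a.pair (listEncode l)

/-- The assignment sending variable `n < m` to `σₙ^G` (and `∅` beyond `m`). -/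
def namesAssign (G : Set ZFSet) (m : ℕ) (σs : Fin m → ZFSet) : ℕ → ZFSet :=
  fun n => if h : n < m then nameEval G (σs ⟨n, h⟩) else ∅

/-- `p ⊩_ℙ φ(σ₀, …, σ_{m-1})` : for every generic `G ∋ p`, `M[G] ⊨ φ(σ₀^G, …, σ_{m-1}^G)`. -/
def Forces (𝕄 : GBModel) (F : ClassForcing 𝕄) (φ : EFormula) (m : ℕ) (p : ZFSet)
    (σs : Fin m → ZFSet) : Prop :=
  ∀ G : Set ZFSet, IsGeneric 𝕄 F.P F.le G → p ∈ G →
    EFormula.Sat (MGen 𝕄 F.P G) (namesAssign G m σs) φ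

/-- `ℙ` satisfies the forcing theorem over `𝕄`: for every `∈`-formula `φ(v₀,…,v_{m-1})`,
the forcing relation is a class of `𝕄` (definability lemma) and everything true in a generic
extension is forced by a condition in the generic filter (truth lemma). -/
def SatisfiesForcingTheorem (𝕄 : GBModel) (F : ClassForcing 𝕄) : Prop :=
  ∀ (φ : EFormula) (m : ℕ), EFormula.VarsLt m φ →
    ({x : ZFSet | ∃ p ∈ F.P, ∃ σs : Fin m → ZFSet,
        (∀ i, σs i ∈ 𝕄.M ∧ IsName F.P (σs i)) ∧
        Forces 𝕄 F φ m p σs ∧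
        x = p.pair (listEncode (List.ofFn σs))} ∈ 𝕄.Cls) ∧
    ∀ σs : Fin m → ZFSet, (∀ i, σs i ∈ 𝕄.M ∧ IsName F.P (σs i)) →
      ∀ G : Set ZFSet, IsGeneric 𝕄 F.P F.le G →
        EFormula.Sat (MGen 𝕄 F.P G) (namesAssign G m σs) φ →
        ∃ p ∈ G, Forces 𝕄 F φ m p σs

/-! ### Complete subforcings, the set reduction property -/

/-- `A` is an antichain of the partial order `⟨S, le⟩`. -/
def IsAntichainIn (S : Set ZFSet) (le : ZFSet → ZFSet → Prop) (A : Set ZFSet) : Prop :=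
  A ⊆ S ∧ ∀ p ∈ A, ∀ q ∈ A, p ≠ q → ¬ Compat S le p q

/-- `A` is a maximal antichain of the partial order `⟨S, le⟩`. -/
def IsMaxAntichainIn (S : Set ZFSet) (le : ZFSet → ZFSet → Prop) (A : Set ZFSet) : Prop :=
  IsAntichainIn S le A ∧ ∀ p ∈ S, ∃ a ∈ A, Compat S le p a

/-- `ℚ ⊲∘ ℙ` : `Q` is a set-sized complete subforcing of `ℙ` (with the induced ordering):
`Q ∈ M`, `Q ⊆ P`, `𝟙 ∈ Q`, and every maximal antichain of `ℚ` in `M` is predense in `ℙ`. -/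
def IsCompleteSub (𝕄 : GBModel) (F : ClassForcing 𝕄) (Q : ZFSet) : Prop :=
  Q ∈ 𝕄.M ∧ Q.toSet ⊆ F.P ∧ F.one ∈ Q ∧
    ∀ A : ZFSet, A ∈ 𝕄.M → A.toSet ⊆ Q.toSet → IsMaxAntichainIn Q.toSet F.le A.toSet →
      ∀ p ∈ F.P, ∃ a : ZFSet, a ∈ A ∧ Compat F.P F.le p a

/-- `ℚ^{∥q}` : the conditions of `Q` compatible with `q` in `ℙ`. -/
def QPar (𝕄 : GBModel) (F : ClassForcing 𝕄) (Q : ZFSet) (q : ZFSet) : Set ZFSet :=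
  {r | r ∈ Q ∧ Compat F.P F.le r q}

/-- The property `(*)(A, q, ℚ)`: for every `a ∈ A`, the set of `r ∈ ℚ^{∥q}` such that either
all `s ≤ q, r` satisfy `s ≤* a`, or all `s ≤ q, r` satisfy `s ⊥ a`, is dense in `ℚ^{∥q}`. -/
def StarProp (𝕄 : GBModel) (F : ClassForcing 𝕄) (A q Q : ZFSet) : Prop :=
  ∀ a : ZFSet, a ∈ A → ∀ r₀ ∈ QPar 𝕄 F Q q, ∃ r₁ ∈ QPar 𝕄 F Q q, F.le r₁ r₀ ∧
    ((∀ s ∈ F.P, F.le s q → F.le s r₁ → leStar F.P F.le s a) ∨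
      (∀ s ∈ F.P, F.le s q → F.le s r₁ → ¬ Compat F.P F.le s a))

/-- The set reduction property. -/
def SetReductionProperty (𝕄 : GBModel) (F : ClassForcing 𝕄) : Prop :=
  ∀ A : ZFSet, A ∈ 𝕄.M → (∀ a : ZFSet, a ∈ A → a ∈ F.P) →
    ∀ p ∈ F.P, ∃ q ∈ F.P, F.le q p ∧ ∃ Q : ZFSet, IsCompleteSub 𝕄 F Q ∧ StarProp 𝕄 F A q Q

/-- Every new set added by `ℙ` is added by a set-sized complete subforcing of `ℙ`. -/
def EveryNewSetBySub (𝕄 : GBModel) (F : ClassForcing 𝕄) : Prop :=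
  ∀ G : Set ZFSet, IsGeneric 𝕄 F.P F.le G →
    ∀ x : ZFSet, x ∈ MGen 𝕄 F.P G → x ∉ 𝕄.M →
      ∃ Q : ZFSet, IsCompleteSub 𝕄 F Q ∧ x ∈ MGen 𝕄 Q.toSet (G ∩ Q.toSet)

/-! ### The q-reduction of a name -/

/-- First component of a Kuratowski pair (junk value `∅` otherwise). -/
def fstZ (x : ZFSet) : ZFSet :=
  if h : ∃ a b : ZFSet, x = a.pair b then h.choose else ∅

/-- Second component of a Kuratowski pair (junk value `∅` otherwise). -/
def sndZ (x : ZFSet) : ZFSet :=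
  if h : ∃ a b : ZFSet, x = a.pair b then h.choose_spec.choose else ∅

/-- Cartesian product of two `ZFSet`s. -/
def zprod (a b : ZFSet) : ZFSet :=
  ZFSet.sep (fun x => ∃ u v : ZFSet, u ∈ a ∧ v ∈ b ∧ x = u.pair v)
    (ZFSet.powerset (ZFSet.powerset (a ∪ b)))

/-- Auxiliary rank-bounded version of the `q`-reduction of a name to `Q`. -/
def reduceAux (S : Set ZFSet) (le : ZFSet → ZFSet → Prop) (Q q : ZFSet) (o : Ordinal)
    (σ : ZFSet) : ZFSet :=
  zimage
    (fun x =>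
      (if h : (fstZ x).rank < o then reduceAux S le Q q (fstZ x).rank (fstZ x) else ∅).pair
        (sndZ x))
    (ZFSet.sep
      (fun x => ∃ τ r : ZFSet, x = τ.pair r ∧ r ∈ Q ∧
        ∃ a : ZFSet, τ.pair a ∈ σ ∧ ∀ s ∈ S, le s q → le s r → leStar S le s a)
      (zprod (⋃₀ ⋃₀ σ) Q))
termination_by o
decreasing_by exact h

/-- The `q`-reduction `σ_q^ℚ = {⟨τ_q^ℚ, r⟩ | r ∈ ℚ ∧ ∃a (⟨τ,a⟩ ∈ σ ∧ ∀ s ≤ q,r (s ≤* a))}`. -/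
def reduceName (S : Set ZFSet) (le : ZFSet → ZFSet → Prop) (Q q σ : ZFSet) : ZFSet :=
  reduceAux S le Q q σ.rank σ

/-! ### Projections -/

/-- `f` is a projection from `⟨S, le⟩` (with maximum `one`) onto the subforcing with domain
`Qs`, respecting `X`. -/
def IsProjectionResp (S : Set ZFSet) (le : ZFSet → ZFSet → Prop) (one : ZFSet)
    (Qs X : Set ZFSet) (f : ZFSet → ZFSet) : Prop :=
  (∀ p ∈ S, f p ∈ Qs) ∧
  f one = one ∧
  (∀ p ∈ S, ∀ q ∈ S, le p q → le (f p) (f q)) ∧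
  (∀ p ∈ S, ∀ q ∈ Qs, le q (f p) → ∃ r ∈ S, le r p ∧ le (f r) q) ∧
  (∀ p ∈ X, ∀ q ∈ S, le (f q) p → le q p) ∧
  (∀ p ∈ X, f p = p)

/-- `ℙ` is approachable by projections: there is a class `Π ∈ 𝒞` whose sections `π_{X,y}`
are such that for every set `X ⊆ ℙ` there are a set `y` and a set-sized subforcing `ℚ ⊇ X ∪ {𝟙}`
of `ℙ` with `π_{X,y} : ℙ → ℚ` a projection respecting `X`. -/
def ApproachableByProjections (𝕄 : GBModel) (F : ClassForcing 𝕄) : Prop :=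
  ∃ Pi ∈ 𝕄.Cls, ∀ X : ZFSet, X ∈ 𝕄.M → (∀ x : ZFSet, x ∈ X → x ∈ F.P) →
    ∃ y ∈ 𝕄.M, ∃ Q : ZFSet, Q ∈ 𝕄.M ∧ Q.toSet ⊆ F.P ∧ (∀ x : ZFSet, x ∈ X → x ∈ Q) ∧
      F.one ∈ Q ∧ ∃ f : ZFSet → ZFSet,
        (∀ u ∈ F.P, ∀ v : ZFSet, (f u = v ↔ X.pair (y.pair (u.pair v)) ∈ Pi)) ∧
        IsProjectionResp F.P F.le F.one Q.toSet X.toSet f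

/-- `p ⊩ σ ⊆ τ` for the forcing with domain `S` and ordering `le`. -/
def ForcesSubset (𝕄 : GBModel) (S : Set ZFSet) (le : ZFSet → ZFSet → Prop)
    (p σ τ : ZFSet) : Prop :=
  ∀ G : Set ZFSet, IsGeneric 𝕄 S le G → p ∈ G → nameEval G σ ⊆ nameEval G τ

/-! ### Bounded names, turning proper classes into sets -/

/-- The possible values of the name `σ` in generic extensions. -/
def PossibleValues (𝕄 : GBModel) (S : Set ZFSet) (le : ZFSet → ZFSet → Prop)
    (σ : ZFSet) : Set ZFSet :=
  {x | ∃ G : Set ZFSet, IsGeneric 𝕄 S le G ∧ nameEval G σ = x}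

/-- The name `σ` is bounded: some `A ∈ M` covers all its possible values lying in `M`. -/
def IsBoundedName (𝕄 : GBModel) (F : ClassForcing 𝕄) (σ : ZFSet) : Prop :=
  ∃ A ∈ 𝕄.M, PossibleValues 𝕄 F.P F.le σ ∩ 𝕄.M ⊆ A.toSet

/-- `ℙ` has bounded names: every `ℙ`-name in `M` is bounded. -/
def HasBoundedNames (𝕄 : GBModel) (F : ClassForcing 𝕄) : Prop :=
  ∀ σ : ZFSet, σ ∈ 𝕄.M → IsName F.P σ → IsBoundedName 𝕄 F σ

/-- `X` is a proper class of `𝕄`: a class of `𝕄` that is not (the extension of) a set of `𝕄`. -/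
def IsProperClass (𝕄 : GBModel) (X : Set ZFSet) : Prop :=
  X ∈ 𝕄.Cls ∧ ¬ ∃ x ∈ 𝕄.M, x.toSet = X

/-- The proper class `X` of `𝕄` is turned into a set by forcing with `ℙ`: some `ℙ`-name in `M`
evaluates to `X` under some generic filter. -/
def TurnsIntoSet (𝕄 : GBModel) (F : ClassForcing 𝕄) (X : Set ZFSet) : Prop :=
  ∃ σ : ZFSet, σ ∈ 𝕄.M ∧ IsName F.P σ ∧
    ∃ G : Set ZFSet, IsGeneric 𝕄 F.P F.le G ∧ (nameEval G σ).toSet = X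

/-! ### Functions and partial functions as sets, collapse forcings -/

/-- `p` is a partial function from (a subset of) `γ` into the class `Y`. -/
def IsPFunOn (p γ : ZFSet) (Y : Set ZFSet) : Prop :=
  (∀ x : ZFSet, x ∈ p → ∃ a b : ZFSet, x = a.pair b ∧ a ∈ γ ∧ b ∈ Y) ∧
  ∀ a b b' : ZFSet, a.pair b ∈ p → a.pair b' ∈ p → b = b'

/-- The domain of a set of pairs. -/
def pdom (p : ZFSet) : Set ZFSet := {a | ∃ b : ZFSet, a.pair b ∈ p}

/-- `f` is (the graph of) an injective function from `X` into `Y`. -/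
def ZInjFun (f : ZFSet) (X Y : Set ZFSet) : Prop :=
  (∀ x : ZFSet, x ∈ f → ∃ a b : ZFSet, x = a.pair b ∧ a ∈ X ∧ b ∈ Y) ∧
  (∀ a b b' : ZFSet, a.pair b ∈ f → a.pair b' ∈ f → b = b') ∧
  (∀ a ∈ X, ∃ b : ZFSet, a.pair b ∈ f) ∧
  (∀ a a' b : ZFSet, a.pair b ∈ f → a'.pair b ∈ f → a = a')

/-- `D` has size less than the cardinality of `γ` in the sense of `M`:
no function of `M` injects `γ` into `D`. -/
def SmallerThan (𝕄 : GBModel) (γ : ZFSet) (D : Set ZFSet) : Prop :=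
  ¬ ∃ f ∈ 𝕄.M, ZInjFun f γ.toSet D

/-- Conditions of `Col(γ, Y)^M`: partial functions of `M` from `γ` to `Y` whose domain has
size less than the cardinality of `γ` in `M`. -/
def ColCond (𝕄 : GBModel) (γ : ZFSet) (Y : Set ZFSet) (p : ZFSet) : Prop :=
  p ∈ 𝕄.M ∧ IsPFunOn p γ Y ∧ SmallerThan 𝕄 γ (pdom p)

/-- Conditions of `Col₋*(γ, Y)^M`: those conditions of `Col(γ, Y)^M` whose domain is
an ordinal. -/
def ColStarCond (𝕄 : GBModel) (γ : ZFSet) (Y : Set ZFSet) (p : ZFSet) : Prop :=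
  ColCond 𝕄 γ Y p ∧ ∃ β : ZFSet, β.IsOrdinal ∧ pdom p = β.toSet

/-- `f` is (the graph of) a function with domain `I`. -/
def ZFuncOn (f I : ZFSet) : Prop :=
  (∀ x : ZFSet, x ∈ f → ∃ a b : ZFSet, x = a.pair b ∧ a ∈ I) ∧
  (∀ a b b' : ZFSet, a.pair b ∈ f → a.pair b' ∈ f → b = b') ∧
  (∀ a : ZFSet, a ∈ I → ∃ b : ZFSet, a.pair b ∈ f)

/-- Application of a set-function to an argument (junk value `∅` if undefined). -/
def zapp (f i : ZFSet) : ZFSet :=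
  if h : ∃ b : ZFSet, i.pair b ∈ f then h.choose else ∅

/-! ### Pretameness -/

/-- `ℙ` is pretame for `𝕄`: for every `p ∈ ℙ`, `I ∈ M` and every `𝒞`-coded sequence
`⟨D_i | i ∈ I⟩` (coded as the class of pairs `⟨i, x⟩` with `x ∈ D_i`) of dense subclasses
of `ℙ`, there are `q ≤ p` and `⟨d_i | i ∈ I⟩ ∈ M` with `d_i ⊆ D_i` predense below `q`. -/
def Pretame (𝕄 : GBModel) (F : ClassForcing 𝕄) : Prop :=
  ∀ p ∈ F.P, ∀ I : ZFSet, I ∈ 𝕄.M → ∀ D ∈ 𝕄.Cls,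
    (∀ i : ZFSet, i ∈ I →
      (∀ x : ZFSet, i.pair x ∈ D → x ∈ F.P) ∧ ∀ r ∈ F.P, ∃ s : ZFSet, i.pair s ∈ D ∧ F.le s r) →
    ∃ q ∈ F.P, F.le q p ∧ ∃ d ∈ 𝕄.M, ZFuncOn d I ∧
      ∀ i : ZFSet, i ∈ I → (∀ x : ZFSet, x ∈ zapp d i → i.pair x ∈ D) ∧
        ∀ r ∈ F.P, F.le r q → ∃ a : ZFSet, a ∈ zapp d i ∧ Compat F.P F.le r a

/-! ### The specific forcings of Sections 6 and 7 -/

/-- Conditions of Definition 6.8: (not necessarily finite) partial functions from `ω` to `2`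
lying in `M`. -/
def PCond (𝕄 : GBModel) (p : ZFSet) : Prop :=
  p ∈ 𝕄.M ∧ IsPFunOn p ZFSet.omega {x : ZFSet | x = ∅ ∨ x = ({∅} : ZFSet)}

/-- Conditions of the finite support product `ℚ` of `ω` many copies of `ℙ`:
finite sequences `⟨p₀, …, p_k⟩` of `ℙ`-conditions. -/
def QCond (𝕄 : GBModel) (s : ZFSet) : Prop :=
  s ∈ 𝕄.M ∧ ∃ n : ZFSet, n ∈ ZFSet.omega ∧ ZFuncOn s n ∧
    ∀ i : ZFSet, i ∈ n → PCond 𝕄 (zapp s i)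

/-- The coordinatewise ordering on `ℚ`. -/
def QLe (s' s : ZFSet) : Prop :=
  pdom s ⊆ pdom s' ∧ ∀ i ∈ pdom s, zapp s i ⊆ zapp s' i

/-- The power class `𝒫(ω)^M`. -/
def PowOmega (𝕄 : GBModel) : Set ZFSet :=
  {x : ZFSet | x ∈ 𝕄.M ∧ x ⊆ ZFSet.omega}

/-- `X ⊆ M` is definable over `⟨M, ∈⟩` (from set parameters). -/
def DefinableOver (Mset : Set ZFSet) (X : Set ZFSet) : Prop :=
  ∃ (φ : EFormula) (v : ℕ → ZFSet), (∀ n, v n ∈ Mset) ∧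
    X = {x : ZFSet | x ∈ Mset ∧ EFormula.Sat Mset (Function.update v 0 x) φ}

/-- Every set of `M` is countable in `M`: it injects into `ω` by a function of `M`. -/
def AllSetsCountable (𝕄 : GBModel) : Prop :=
  ∀ x ∈ 𝕄.M, ∃ f ∈ 𝕄.M, ZInjFun f x.toSet ZFSet.omega.toSet

/-!
Let `σ ∈ M` be a `ℙ`-name. Choose a transitive `t ∈ M` with `σ ∈ t`, put `X = t ∩ P`, and let
`π : ℙ → ℚ` be a projection respecting `X`. If `G` is `ℙ`-generic, the upward closure `H` of `π[G]`
in `ℚ` is `ℚ`-generic and has the same elements in `X` as `G`; since all conditions occurring in `σ`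
lie in `X`, we get `σ^H = σ^G`. So it suffices to bound `σ` as a name for the set forcing `ℚ`.
There the relation `q ⊩ σ = x̌` is a class, each value of `σ` in `M` is forced by some `q ∈ ℚ`, and
each `q` forces at most one value: Collection over the set `ℚ` bounds all values.

Without the power set axiom, the class of triples with `q ⊩ σ = x̌` is obtained as the union of all
sets `W ∈ M` of triples whose members are justified by other members of `W`.
-/

/-! ### Closure properties of the model -/

namespace GBModel

variable {𝕄 : GBModel} {x y : ZFSet}

lemma mem_of_mem (hy : y ∈ 𝕄.M) (hxy : x ∈ y) : x ∈ 𝕄.M := 𝕄.transitive y hy x hxy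

lemma singleton_mem (hx : x ∈ 𝕄.M) : ({x} : ZFSet) ∈ 𝕄.M := by
  simpa using 𝕄.pair_mem x hx x hx

lemma ordPair_mem (hx : x ∈ 𝕄.M) (hy : y ∈ 𝕄.M) : x.pair y ∈ 𝕄.M :=
  𝕄.pair_mem _ (singleton_mem hx) _ (𝕄.pair_mem x hx y hy)

lemma insert_mem (hx : x ∈ 𝕄.M) (hy : y ∈ 𝕄.M) : insert x y ∈ 𝕄.M := by
  rw [ZFSet.insert_eq, ← ZFSet.sUnion_pair]
  exact 𝕄.sUnion_mem _ (𝕄.pair_mem _ (singleton_mem hx) y hy)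

lemma left_mem_of_ordPair_mem (h : x.pair y ∈ 𝕄.M) : x ∈ 𝕄.M :=
  mem_of_mem (mem_of_mem h (by simp [ZFSet.pair] : {x} ∈ x.pair y)) (by simp)

lemma right_mem_of_ordPair_mem (h : x.pair y ∈ 𝕄.M) : y ∈ 𝕄.M :=
  mem_of_mem (mem_of_mem h (by simp [ZFSet.pair] : {x, y} ∈ x.pair y)) (by simp)

lemma ext_iff_of_mem (hx : x ∈ 𝕄.M) (hy : y ∈ 𝕄.M) :
    (∀ z ∈ 𝕄.M, (z ∈ x ↔ z ∈ y)) ↔ x = y := by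
  refine ⟨fun h => ZFSet.ext fun z => ?_, fun h => by simp [h]⟩
  exact ⟨fun hz => (h z (mem_of_mem hx hz)).1 hz, fun hz => (h z (mem_of_mem hy hz)).2 hz⟩

lemma exists_mem_iff {P : ZFSet → Prop} (hx : x ∈ 𝕄.M) :
    (∃ z ∈ 𝕄.M, z ∈ x ∧ P z) ↔ ∃ z ∈ x, P z :=
  ⟨fun ⟨z, _, h⟩ => ⟨z, h⟩, fun ⟨z, h⟩ => ⟨z, mem_of_mem hx h.1, h⟩⟩

lemma forall_mem_iff {P : ZFSet → Prop} (hx : x ∈ 𝕄.M) :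
    (∀ z ∈ 𝕄.M, z ∈ x → P z) ↔ ∀ z ∈ x, P z :=
  ⟨fun h z hz => h z (mem_of_mem hx hz) hz, fun h z _ => h z⟩

lemma exists_ordPair_mem_iff {P : ZFSet → ZFSet → Prop} (hx : x ∈ 𝕄.M) :
    (∃ a ∈ 𝕄.M, ∃ b ∈ 𝕄.M, a.pair b ∈ x ∧ P a b) ↔ ∃ a b, a.pair b ∈ x ∧ P a b :=
  ⟨fun ⟨a, _, b, _, h⟩ => ⟨a, b, h⟩, fun ⟨a, b, h⟩ => have hab := mem_of_mem hx h.1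
    ⟨a, left_mem_of_ordPair_mem hab, b, right_mem_of_ordPair_mem hab, h⟩⟩

lemma forall_ordPair_mem_iff {P : ZFSet → ZFSet → Prop} (hx : x ∈ 𝕄.M) :
    (∀ a ∈ 𝕄.M, ∀ b ∈ 𝕄.M, a.pair b ∈ x → P a b) ↔ ∀ a b, a.pair b ∈ x → P a b :=
  ⟨fun h a b hab => h a (left_mem_of_ordPair_mem (mem_of_mem hx hab)) b
    (right_mem_of_ordPair_mem (mem_of_mem hx hab)) hab, fun h a _ b _ => h a b⟩

lemma exists_enum_classes (𝕄 : GBModel) : ∃ C : ℕ → Set ZFSet, 𝕄.Cls = Set.range C :=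
  𝕄.countable_Cls.exists_eq_range ⟨_, 𝕄.sets_are_classes ∅ 𝕄.empty_mem⟩

/-- An enumeration of all classes of `𝕄`. Interpreting the class parameters of every formula by this
one assignment makes renaming of class parameters unnecessary. -/
def classEnum (𝕄 : GBModel) : ℕ → Set ZFSet := 𝕄.exists_enum_classes.choose

lemma classes_eq_range_classEnum (𝕄 : GBModel) : 𝕄.Cls = Set.range 𝕄.classEnum :=
  𝕄.exists_enum_classes.choose_spec

lemma update_mem {v : ℕ → ZFSet} (hv : ∀ n, v n ∈ 𝕄.M) (j : ℕ) (hx : x ∈ 𝕄.M) (n : ℕ) :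
    Function.update v j x n ∈ 𝕄.M := by
  rcases eq_or_ne n j with rfl | hn
  · simpa using hx
  · simpa [hn] using hv n

end GBModel

/-! ### Expressible predicates -/

/-- `P` is the satisfaction predicate, on assignments into `M`, of a formula with class parameters
from `𝕄`. -/
def Expressible (𝕄 : GBModel) (P : (ℕ → ZFSet) → Prop) : Prop :=
  ∃ φ : GBFormula, ∀ v, (∀ n, v n ∈ 𝕄.M) → (φ.Sat 𝕄.M 𝕄.classEnum v ↔ P v)

namespace Expressible

variable {𝕄 : GBModel} {P Q : (ℕ → ZFSet) → Prop}

lemma congr (hP : Expressible 𝕄 P) (hPQ : ∀ v, (∀ n, v n ∈ 𝕄.M) → (P v ↔ Q v)) :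
    Expressible 𝕄 Q :=
  let ⟨φ, hφ⟩ := hP
  ⟨φ, fun v hv => (hφ v hv).trans (hPQ v hv)⟩

lemma mem (i j : ℕ) : Expressible 𝕄 fun v => v i ∈ v j := ⟨.mem i j, fun _ _ => Iff.rfl⟩

lemma eq (i j : ℕ) : Expressible 𝕄 fun v => v i = v j := ⟨.eq i j, fun _ _ => Iff.rfl⟩

lemma cls {C : Set ZFSet} (hC : C ∈ 𝕄.Cls) (i : ℕ) : Expressible 𝕄 fun v => v i ∈ C := by
  rw [𝕄.classes_eq_range_classEnum] at hC
  obtain ⟨n, rfl⟩ := hC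
  exact ⟨.cls i n, fun _ _ => Iff.rfl⟩

lemma not (hP : Expressible 𝕄 P) : Expressible 𝕄 fun v => ¬ P v :=
  let ⟨φ, hφ⟩ := hP
  ⟨.not φ, fun v hv => not_congr (hφ v hv)⟩

lemma or (hP : Expressible 𝕄 P) (hQ : Expressible 𝕄 Q) : Expressible 𝕄 fun v => P v ∨ Q v :=
  let ⟨φ, hφ⟩ := hP
  let ⟨ψ, hψ⟩ := hQ
  ⟨.or φ ψ, fun v hv => or_congr (hφ v hv) (hψ v hv)⟩

lemma imp (hP : Expressible 𝕄 P) (hQ : Expressible 𝕄 Q) : Expressible 𝕄 fun v => P v → Q v :=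
  (hP.not.or hQ).congr fun _ _ => imp_iff_not_or.symm

lemma and (hP : Expressible 𝕄 P) (hQ : Expressible 𝕄 Q) : Expressible 𝕄 fun v => P v ∧ Q v :=
  (hP.not.or hQ.not).not.congr fun _ _ => by tauto

lemma iff (hP : Expressible 𝕄 P) (hQ : Expressible 𝕄 Q) : Expressible 𝕄 fun v => (P v ↔ Q v) :=
  ((hP.imp hQ).and (hQ.imp hP)).congr fun _ _ => iff_iff_implies_and_implies.symm

lemma ex (hP : Expressible 𝕄 P) (j : ℕ) :
    Expressible 𝕄 fun v => ∃ x ∈ 𝕄.M, P (Function.update v j x) :=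
  let ⟨φ, hφ⟩ := hP
  ⟨.ex j φ, fun _ hv => exists_congr fun _ =>
    and_congr_right fun hx => hφ _ (GBModel.update_mem hv j hx)⟩

lemma all (hP : Expressible 𝕄 P) (j : ℕ) :
    Expressible 𝕄 fun v => ∀ x ∈ 𝕄.M, P (Function.update v j x) :=
  (hP.not.ex j).not.congr fun v _ => by simp

lemma eq_of_mem {t : (ℕ → ZFSet) → ZFSet} {j l : ℕ} (hlj : l ≠ j)
    (ht : ∀ v, (∀ n, v n ∈ 𝕄.M) → t v ∈ 𝕄.M) (hfresh : ∀ v z, t (Function.update v l z) = t v)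
    (hmem : Expressible 𝕄 fun v => v l ∈ t v) : Expressible 𝕄 fun v => v j = t v := by
  refine (((mem l j).iff hmem).all l).congr fun v hv => ?_
  simp only [hfresh, Function.update_self, Function.update_of_ne hlj.symm]
  exact GBModel.ext_iff_of_mem (hv j) (ht v hv)

lemma eq_pair (i a b : ℕ) : Expressible 𝕄 fun v => v i = ({v a, v b} : ZFSet) := by
  obtain ⟨l, hl⟩ := Infinite.exists_notMem_finset ({i, a, b} : Finset ℕ)
  simp only [Finset.mem_insert, Finset.mem_singleton, not_or] at hl
  obtain ⟨hli, hla, hlb⟩ := hl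
  refine eq_of_mem hli (fun v hv => 𝕄.pair_mem _ (hv a) _ (hv b))
    (fun v z => by simp [Ne.symm hla, Ne.symm hlb]) ?_
  exact ((eq l a).or (eq l b)).congr fun v _ => ZFSet.mem_pair.symm

lemma eq_ordPair (i a b : ℕ) : Expressible 𝕄 fun v => v i = (v a).pair (v b) := by
  obtain ⟨l, hl⟩ := Infinite.exists_notMem_finset ({i, a, b} : Finset ℕ)
  simp only [Finset.mem_insert, Finset.mem_singleton, not_or] at hl
  obtain ⟨hli, hla, hlb⟩ := hl
  refine eq_of_mem hli (fun v hv => GBModel.ordPair_mem (hv a) (hv b))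
    (fun v z => by simp [Ne.symm hla, Ne.symm hlb]) ?_
  exact ((eq_pair l a a).or (eq_pair l a b)).congr fun v _ => by simp [ZFSet.pair]

lemma eq_const {c : ZFSet} (hc : c ∈ 𝕄.M) (j : ℕ) : Expressible 𝕄 fun v => v j = c :=
  eq_of_mem (Nat.succ_ne_self j) (fun _ _ => hc) (fun _ _ => rfl)
    (cls (𝕄.sets_are_classes c hc) (j + 1))

lemma subst {t : (ℕ → ZFSet) → ZFSet} {j : ℕ} (hP : Expressible 𝕄 P)
    (ht : ∀ v, (∀ n, v n ∈ 𝕄.M) → t v ∈ 𝕄.M) (hfresh : ∀ v z, t (Function.update v j z) = t v)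
    (hgraph : Expressible 𝕄 fun v => v j = t v) :
    Expressible 𝕄 fun v => P (Function.update v j (t v)) := by
  refine ((hgraph.and hP).ex j).congr fun v hv => ?_
  simp only [hfresh, Function.update_self]
  exact ⟨by rintro ⟨_, -, rfl, h⟩; exact h, fun h => ⟨t v, ht v hv, rfl, h⟩⟩

end Expressible

/-! ### Definable predicates -/

/-- Terms in `k` variables built from variables, constants of `M` and ordered pairing. -/
inductive DefinableTerm (𝕄 : GBModel) {k : ℕ} : ((Fin k → ZFSet) → ZFSet) → Prop
  | var (i : Fin k) : DefinableTerm 𝕄 fun v => v i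
  | const {c : ZFSet} (hc : c ∈ 𝕄.M) : DefinableTerm 𝕄 fun _ => c
  | pair {s t : (Fin k → ZFSet) → ZFSet} (hs : DefinableTerm 𝕄 s) (ht : DefinableTerm 𝕄 t) :
      DefinableTerm 𝕄 fun v => (s v).pair (t v)

/-- Predicates in `k` variables built from atomic predicates on definable terms, with class
parameters, by connectives and quantifiers over `M`, over the elements of a set, and over the
ordered pairs in a set. A quantified variable is appended as the last coordinate, so that a
predicate written in ordinary notation is definable by structural recursion on its syntax. -/
inductive Definable (𝕄 : GBModel) : ∀ {k : ℕ}, ((Fin k → ZFSet) → Prop) → Prop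
  | mem {k : ℕ} {s t : (Fin k → ZFSet) → ZFSet} (hs : DefinableTerm 𝕄 s)
      (ht : DefinableTerm 𝕄 t) : Definable 𝕄 fun v => s v ∈ t v
  | eq {k : ℕ} {s t : (Fin k → ZFSet) → ZFSet} (hs : DefinableTerm 𝕄 s)
      (ht : DefinableTerm 𝕄 t) : Definable 𝕄 fun v => s v = t v
  | cls {k : ℕ} {s : (Fin k → ZFSet) → ZFSet} {C : Set ZFSet} (hs : DefinableTerm 𝕄 s)
      (hC : C ∈ 𝕄.Cls) : Definable 𝕄 fun v => s v ∈ C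
  | not {k : ℕ} {P : (Fin k → ZFSet) → Prop} (hP : Definable 𝕄 P) : Definable 𝕄 fun v => ¬ P v
  | and {k : ℕ} {P Q : (Fin k → ZFSet) → Prop} (hP : Definable 𝕄 P) (hQ : Definable 𝕄 Q) :
      Definable 𝕄 fun v => P v ∧ Q v
  | or {k : ℕ} {P Q : (Fin k → ZFSet) → Prop} (hP : Definable 𝕄 P) (hQ : Definable 𝕄 Q) :
      Definable 𝕄 fun v => P v ∨ Q v
  | imp {k : ℕ} {P Q : (Fin k → ZFSet) → Prop} (hP : Definable 𝕄 P) (hQ : Definable 𝕄 Q) :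
      Definable 𝕄 fun v => P v → Q v
  | ex {k : ℕ} {P : (Fin k → ZFSet) → ZFSet → Prop}
      (hP : Definable 𝕄 fun w : Fin (k + 1) → ZFSet => P (fun i => w i.castSucc) (w (Fin.last k))) :
      Definable 𝕄 fun v => ∃ x ∈ 𝕄.M, P v x
  | all {k : ℕ} {P : (Fin k → ZFSet) → ZFSet → Prop}
      (hP : Definable 𝕄 fun w : Fin (k + 1) → ZFSet => P (fun i => w i.castSucc) (w (Fin.last k))) :
      Definable 𝕄 fun v => ∀ x ∈ 𝕄.M, P v x
  | exMem {k : ℕ} {t : (Fin k → ZFSet) → ZFSet} {P : (Fin k → ZFSet) → ZFSet → Prop}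
      (ht : DefinableTerm 𝕄 t)
      (hP : Definable 𝕄 fun w : Fin (k + 1) → ZFSet => P (fun i => w i.castSucc) (w (Fin.last k))) :
      Definable 𝕄 fun v => ∃ x ∈ t v, P v x
  | allMem {k : ℕ} {t : (Fin k → ZFSet) → ZFSet} {P : (Fin k → ZFSet) → ZFSet → Prop}
      (ht : DefinableTerm 𝕄 t)
      (hP : Definable 𝕄 fun w : Fin (k + 1) → ZFSet => P (fun i => w i.castSucc) (w (Fin.last k))) :
      Definable 𝕄 fun v => ∀ x ∈ t v, P v x
  | exPair {k : ℕ} {t : (Fin k → ZFSet) → ZFSet} {P : (Fin k → ZFSet) → ZFSet → ZFSet → Prop}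
      (ht : DefinableTerm 𝕄 t)
      (hP : Definable 𝕄 fun w : Fin (k + 2) → ZFSet =>
        P (fun i => w i.castSucc.castSucc) (w (Fin.last k).castSucc) (w (Fin.last (k + 1)))) :
      Definable 𝕄 fun v => ∃ x y, x.pair y ∈ t v ∧ P v x y
  | allPair {k : ℕ} {t : (Fin k → ZFSet) → ZFSet} {P : (Fin k → ZFSet) → ZFSet → ZFSet → Prop}
      (ht : DefinableTerm 𝕄 t)
      (hP : Definable 𝕄 fun w : Fin (k + 2) → ZFSet =>
        P (fun i => w i.castSucc.castSucc) (w (Fin.last k).castSucc) (w (Fin.last (k + 1)))) :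
      Definable 𝕄 fun v => ∀ x y, x.pair y ∈ t v → P v x y

lemma update_apply_fin {α : Type*} {k j : ℕ} (h : k ≤ j) (v : ℕ → α) (x : α) :
    (fun i : Fin k => Function.update v j x i) = fun i : Fin k => v i :=
  funext fun i => Function.update_of_ne (by omega) ..

lemma DefinableTerm.mem {𝕄 : GBModel} {k : ℕ} {t : (Fin k → ZFSet) → ZFSet}
    (ht : DefinableTerm 𝕄 t) {v : Fin k → ZFSet} (hv : ∀ i, v i ∈ 𝕄.M) : t v ∈ 𝕄.M := by
  induction ht with
  | var i => exact hv i
  | const hc => exact hc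
  | pair _ _ hs ht => exact GBModel.ordPair_mem hs ht

namespace DefinableTerm

variable {𝕄 : GBModel} {k : ℕ} {s t : (Fin k → ZFSet) → ZFSet}

lemma castSucc (ht : DefinableTerm 𝕄 t) :
    DefinableTerm 𝕄 fun w : Fin (k + 1) → ZFSet => t fun i => w i.castSucc := by
  induction ht with
  | var i => exact .var i.castSucc
  | const hc => exact .const hc
  | pair _ _ hs ht => exact hs.pair ht

lemma expressible_eq (ht : DefinableTerm 𝕄 t) {j : ℕ} (hj : k ≤ j) :
    Expressible 𝕄 fun v => v j = t fun i => v i := by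
  induction ht generalizing j with
  | var i => exact .eq j i
  | const hc => exact .eq_const hc j
  | @pair s t hs ht ihs iht =>
    have fresh (l : ℕ) (hl : k ≤ l) (u : (Fin k → ZFSet) → ZFSet) (v : ℕ → ZFSet) (z : ZFSet) :
        (u fun i => Function.update v l z i) = u fun i => v i := by rw [update_apply_fin hl]
    refine (((Expressible.eq_ordPair j (j + 1) (j + 2)).subst (fun v hv => ht.mem fun i => hv i)
      (fresh (j + 2) (by omega) t) (iht (by omega))).subst (fun v hv => hs.mem fun i => hv i)
      (fresh (j + 1) (by omega) s) (ihs (by omega))).congr fun v _ => ?_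
    simp [update_apply_fin (show k ≤ j + 1 by omega)]

lemma expressible_subst (ht : DefinableTerm 𝕄 t) {j : ℕ} (hj : k ≤ j)
    {P : (ℕ → ZFSet) → Prop} (hP : Expressible 𝕄 P) :
    Expressible 𝕄 fun v => P (Function.update v j (t fun i => v i)) :=
  hP.subst (fun _ hv => ht.mem fun i => hv i) (fun v z => by rw [update_apply_fin hj])
    (ht.expressible_eq hj)

lemma expressible_mem (hs : DefinableTerm 𝕄 s) (ht : DefinableTerm 𝕄 t) :
    Expressible 𝕄 fun v => (s fun i => v i) ∈ t fun i => v i :=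
  (hs.expressible_subst le_rfl (ht.expressible_subst k.le_succ (.mem k (k + 1)))).congr
    fun v _ => by simp [update_apply_fin]

end DefinableTerm

namespace Definable

variable {𝕄 : GBModel}

lemma expressible {k : ℕ} {P : (Fin k → ZFSet) → Prop} (hP : Definable 𝕄 P) :
    Expressible 𝕄 fun v => P fun i => v i := by
  induction hP with
  | mem hs ht => exact hs.expressible_mem ht
  | @eq k s t hs ht =>
    exact (hs.expressible_subst le_rfl (ht.expressible_eq le_rfl)).congr
      fun v _ => by simp [update_apply_fin]
  | @cls k s C hs hC =>
    exact (hs.expressible_subst le_rfl (.cls hC k)).congr fun v _ => by simp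
  | not _ hP => exact hP.not
  | and _ _ hP hQ => exact hP.and hQ
  | or _ _ hP hQ => exact hP.or hQ
  | imp _ _ hP hQ => exact hP.imp hQ
  | @ex k P _ hP => exact (hP.ex k).congr fun v _ => by simp [update_apply_fin]
  | @all k P _ hP => exact (hP.all k).congr fun v _ => by simp [update_apply_fin]
  | @exMem k t P ht _ hP =>
    refine ((((DefinableTerm.var (Fin.last k)).expressible_mem ht.castSucc).and hP).ex k).congr
      fun v hv => ?_
    simpa [update_apply_fin] using GBModel.exists_mem_iff (ht.mem fun i => hv i)
  | @allMem k t P ht _ hP =>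
    refine ((((DefinableTerm.var (Fin.last k)).expressible_mem ht.castSucc).imp hP).all k).congr
      fun v hv => ?_
    simpa [update_apply_fin] using GBModel.forall_mem_iff (ht.mem fun i => hv i)
  | @exPair k t P ht _ hP =>
    refine ((((DefinableTerm.var (Fin.last k).castSucc).pair (.var (Fin.last (k + 1)))
      |>.expressible_mem ht.castSucc.castSucc).and hP).ex (k + 1) |>.ex k).congr fun v hv => ?_
    simpa [update_apply_fin] using GBModel.exists_ordPair_mem_iff (ht.mem fun i => hv i)
  | @allPair k t P ht _ hP =>
    refine ((((DefinableTerm.var (Fin.last k).castSucc).pair (.var (Fin.last (k + 1)))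
      |>.expressible_mem ht.castSucc.castSucc).imp hP).all (k + 1) |>.all k).congr fun v hv => ?_
    simpa [update_apply_fin] using GBModel.forall_ordPair_mem_iff (ht.mem fun i => hv i)

end Definable

/-! ### Separation and collection for definable predicates -/

namespace GBModel

variable {𝕄 : GBModel} {a b x : ZFSet}

lemma setOf_mem_classes {P : ZFSet → Prop} (hP : Definable 𝕄 fun v : Fin 1 → ZFSet => P (v 0)) :
    {x | x ∈ 𝕄.M ∧ P x} ∈ 𝕄.Cls := by
  obtain ⟨φ, hφ⟩ := hP.expressible
  convert 𝕄.comprehension φ (fun _ => ∅) 𝕄.classEnum (fun _ => 𝕄.empty_mem)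
    (fun n => 𝕄.classes_eq_range_classEnum ▸ Set.mem_range_self n) using 1
  ext x
  refine and_congr_right fun hx => ?_
  rw [hφ _ (update_mem (fun _ => 𝕄.empty_mem) 0 hx)]
  simp

lemma sep_mem {P : ZFSet → Prop} (hP : Definable 𝕄 fun v : Fin 1 → ZFSet => P (v 0))
    (ha : a ∈ 𝕄.M) : ZFSet.sep P a ∈ 𝕄.M := by
  obtain ⟨b, hb, hmem⟩ := 𝕄.separation _ (setOf_mem_classes hP) a ha
  convert hb using 1
  ext x
  rw [ZFSet.mem_sep, hmem]
  exact and_congr_right fun hx => (and_iff_right (mem_of_mem ha hx)).symm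

lemma exists_collection {P : ZFSet → ZFSet → Prop}
    (hP : {z | z ∈ 𝕄.M ∧ ∃ x ∈ 𝕄.M, ∃ y ∈ 𝕄.M, z = x.pair y ∧ P x y} ∈ 𝕄.Cls) (ha : a ∈ 𝕄.M) :
    ∃ b ∈ 𝕄.M, ∀ x ∈ a, (∃ y ∈ 𝕄.M, P x y) → ∃ y ∈ b, P x y := by
  set C := {z | z ∈ 𝕄.M ∧ ∃ x ∈ 𝕄.M, ∃ y ∈ 𝕄.M, z = x.pair y ∧ P x y}
  have pair_mem_C {x y : ZFSet} : x.pair y ∈ C ↔ x ∈ 𝕄.M ∧ y ∈ 𝕄.M ∧ P x y := by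
    constructor
    · rintro ⟨-, x', hx, y', hy, hxy, h⟩
      obtain ⟨rfl, rfl⟩ := ZFSet.pair_inj.1 hxy
      exact ⟨hx, hy, h⟩
    · rintro ⟨hx, hy, h⟩
      exact ⟨ordPair_mem hx hy, x, hx, y, hy, rfl, h⟩
  have hdom : ZFSet.sep (fun x => ∃ y ∈ 𝕄.M, x.pair y ∈ C) a ∈ 𝕄.M :=
    sep_mem (by repeat' first | assumption | constructor) ha
  obtain ⟨b, hb, hcoll⟩ := 𝕄.collection C hP _ hdom fun x hx => (ZFSet.mem_sep.1 hx).2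
  refine ⟨b, hb, fun x hx ⟨y, hy, hxy⟩ => ?_⟩
  obtain ⟨y', hy', h⟩ := hcoll x
    (ZFSet.mem_sep.2 ⟨hx, y, hy, pair_mem_C.2 ⟨mem_of_mem ha hx, hy, hxy⟩⟩)
  exact ⟨y', hy', (pair_mem_C.1 h).2.2⟩

lemma prod_mem (ha : a ∈ 𝕄.M) (hb : b ∈ 𝕄.M) : a.prod b ∈ 𝕄.M := by
  have row (u : ZFSet) (hu : u ∈ 𝕄.M) : ∃ w ∈ 𝕄.M, ∀ v ∈ b, u.pair v ∈ w := by
    obtain ⟨w, hw, h⟩ := exists_collection (𝕄 := 𝕄) (P := fun v z => z = u.pair v)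
      (setOf_mem_classes (by repeat' first | assumption | constructor)) hb
    refine ⟨w, hw, fun v hv => ?_⟩
    obtain ⟨_, hz, rfl⟩ := h v hv ⟨_, ordPair_mem hu (mem_of_mem hb hv), rfl⟩
    exact hz
  obtain ⟨c, hc, hrows⟩ := exists_collection (𝕄 := 𝕄) (P := fun u w => ∀ v ∈ b, u.pair v ∈ w)
    (setOf_mem_classes (by repeat' first | assumption | constructor)) ha
  have hsep : ZFSet.sep (fun z => ∃ u ∈ a, ∃ v ∈ b, z = u.pair v) (⋃₀ c) ∈ 𝕄.M :=
    sep_mem (by repeat' first | assumption | constructor) (𝕄.sUnion_mem c hc)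
  convert hsep using 1
  ext z
  rw [ZFSet.mem_prod, ZFSet.mem_sep, iff_and_self]
  rintro ⟨u, hu, v, hv, rfl⟩
  obtain ⟨w, hw, h⟩ := hrows u hu (row u (mem_of_mem ha hu))
  exact ZFSet.mem_sUnion_of_mem (h v hv) hw

lemma definable_isTransitive {k : ℕ} (i : Fin k) :
    Definable 𝕄 fun v => (v i).IsTransitive := by
  simp only [ZFSet.IsTransitive, ZFSet.subset_def]
  repeat' constructor

lemma exists_isTransitive_mem (hx : x ∈ 𝕄.M) : ∃ t ∈ 𝕄.M, t.IsTransitive ∧ x ∈ t := by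
  induction x using ZFSet.inductionOn with
  | _ x ih =>
    obtain ⟨b, hb, hcover⟩ := exists_collection (𝕄 := 𝕄) (P := fun y t => t.IsTransitive ∧ y ∈ t)
      (setOf_mem_classes (by repeat' first | exact definable_isTransitive _ | constructor)) hx
    have hsep : ZFSet.sep ZFSet.IsTransitive b ∈ 𝕄.M := sep_mem (definable_isTransitive 0) hb
    set u : ZFSet := ⋃₀ ZFSet.sep ZFSet.IsTransitive b
    have hu : u.IsTransitive := ZFSet.IsTransitive.sUnion' fun y hy => (ZFSet.mem_sep.1 hy).2
    have hxu : x ⊆ u := fun y hy => by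
      obtain ⟨t, htb, ht, hyt⟩ := hcover y hy (ih y hy (mem_of_mem hx hy))
      exact ZFSet.mem_sUnion_of_mem hyt (ZFSet.mem_sep.2 ⟨htb, ht⟩)
    refine ⟨insert x u, insert_mem hx (𝕄.sUnion_mem _ hsep), fun y hy z hz => ?_,
      ZFSet.mem_insert x u⟩
    rcases ZFSet.mem_insert_iff.1 hy with rfl | hy
    · exact ZFSet.mem_insert_of_mem _ (hxu hz)
    · exact ZFSet.mem_insert_of_mem _ (hu y hy hz)

end GBModel

/-! ### Names -/

section Names

variable {S S' G H : Set ZFSet} {σ τ p t : ZFSet}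

lemma mem_sUnion_sUnion_of_pair_mem (h : τ.pair p ∈ σ) : τ ∈ (⋃₀ (⋃₀ σ : ZFSet) : ZFSet) :=
  ZFSet.mem_sUnion_of_mem (z := {τ}) (by simp)
    (ZFSet.mem_sUnion_of_mem (z := τ.pair p) (by simp [ZFSet.pair]) h)

lemma rank_lt_of_pair_mem (h : τ.pair p ∈ σ) : τ.rank < σ.rank :=
  calc τ.rank < ({τ} : ZFSet).rank := ZFSet.rank_lt_of_mem (by simp)
    _ < (τ.pair p).rank := ZFSet.rank_lt_of_mem (by simp [ZFSet.pair])
    _ < σ.rank := ZFSet.rank_lt_of_mem h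

lemma name_induction {motive : ZFSet → Prop} (σ : ZFSet)
    (step : ∀ σ, (∀ τ p, τ.pair p ∈ σ → motive τ) → motive σ) : motive σ := by
  induction h : σ.rank using WellFoundedLT.induction generalizing σ with
  | _ o ih => exact step σ fun τ p hτp => ih τ.rank (h ▸ rank_lt_of_pair_mem hτp) τ rfl

lemma mem_nameEval {y : ZFSet} :
    y ∈ nameEval G σ ↔ ∃ τ p, p ∈ G ∧ τ.pair p ∈ σ ∧ nameEval G τ = y := by
  rw [nameEval, nameEvalAux, zimage, @ZFSet.mem_image _ (Classical.allZFSetDefinable _)]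
  constructor
  · rintro ⟨τ, hτ, h⟩
    obtain ⟨-, p, hp, hτp⟩ := ZFSet.mem_sep.1 hτ
    rw [dif_pos (rank_lt_of_pair_mem hτp)] at h
    exact ⟨τ, p, hp, hτp, h⟩
  · rintro ⟨τ, p, hp, hτp, h⟩
    refine ⟨τ, ZFSet.mem_sep.2 ⟨mem_sUnion_sUnion_of_pair_mem hτp, p, hp, hτp⟩, ?_⟩
    rwa [dif_pos (rank_lt_of_pair_mem hτp)]

lemma isName_iff : IsName S σ ↔ ∀ x ∈ σ, ∃ τ p, x = τ.pair p ∧ p ∈ S ∧ IsName S τ := by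
  rw [IsName, IsNameAux]
  refine forall₂_congr fun x hx => exists₂_congr fun τ p => and_congr_right ?_
  rintro rfl
  exact and_congr_right fun _ => ⟨fun ⟨_, h⟩ => h, fun h => ⟨rank_lt_of_pair_mem hx, h⟩⟩

lemma IsName.of_pair_mem (hσ : IsName S σ) (h : τ.pair p ∈ σ) : p ∈ S ∧ IsName S τ := by
  obtain ⟨τ', p', hpair, hp, hτ⟩ := isName_iff.1 hσ _ h
  obtain ⟨rfl, rfl⟩ := ZFSet.pair_inj.1 hpair
  exact ⟨hp, hτ⟩

lemma IsName.of_mem_isTransitive (hσ : IsName S σ) (ht : t.IsTransitive) (hσt : σ ∈ t)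
    (hS : ∀ p ∈ t, p ∈ S → p ∈ S') : IsName S' σ := by
  induction σ using name_induction with
  | _ σ ih =>
    refine isName_iff.2 fun x hx => ?_
    obtain ⟨τ, p, rfl, hp, hτ⟩ := isName_iff.1 hσ x hx
    have hpair : ({τ, p} : ZFSet) ∈ t := ht _ (ht σ hσt hx) (by simp [ZFSet.pair])
    exact ⟨τ, p, rfl, hS p (ht _ hpair (by simp)) hp, ih τ p hx hτ (ht _ hpair (by simp))⟩

lemma IsName.nameEval_congr (hσ : IsName S σ) (hGH : ∀ p ∈ S, (p ∈ G ↔ p ∈ H)) :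
    nameEval G σ = nameEval H σ := by
  induction σ using name_induction with
  | _ σ ih =>
    ext y
    simp only [mem_nameEval]
    refine exists₂_congr fun τ p => ?_
    by_cases hτp : τ.pair p ∈ σ
    · obtain ⟨hp, hτ⟩ := hσ.of_pair_mem hτp
      rw [hGH p hp, ih τ p hτp hτ]
    · simp [hτp]

end Names

/-! ### The relation `q ⊩ σ = x̌` for a set forcing -/

/-- A set-sized notion of forcing: a preorder on a set `Q ∈ M` whose order relation is a class of
`𝕄`, given as a class of ordered pairs. -/
structure SetForcing (𝕄 : GBModel) where
  Q : ZFSet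
  order : Set ZFSet
  Q_mem : Q ∈ 𝕄.M
  order_mem_classes : order ∈ 𝕄.Cls
  le_refl : ∀ q ∈ Q, q.pair q ∈ order
  le_trans : ∀ {p q r : ZFSet}, p.pair q ∈ order → q.pair r ∈ order → p.pair r ∈ order

namespace SetForcing

variable {𝕄 : GBModel} (R : SetForcing 𝕄) {q r σ x : ZFSet} {H : Set ZFSet}

/-- The order of a set forcing as a relation. -/
abbrev le (p q : ZFSet) : Prop := p.pair q ∈ R.order

/-- The recursion clause for `q ⊩ σ = x̌`, with `W s τ y` in place of `s ⊩ τ = y̌`: the first half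
says `q ⊩ σ ⊆ x̌`, the second `q ⊩ x̌ ⊆ σ`. -/
def ForcesStep (W : ZFSet → ZFSet → ZFSet → Prop) (q σ x : ZFSet) : Prop :=
  (∀ τ p, τ.pair p ∈ σ → ∀ r ∈ R.Q, R.le r q → R.le r p →
    ∃ s ∈ R.Q, R.le s r ∧ ∃ y ∈ x, W s τ y) ∧
  ∀ y ∈ x, ∀ r ∈ R.Q, R.le r q → ∃ s ∈ R.Q, R.le s r ∧ ∃ τ p, τ.pair p ∈ σ ∧ R.le s p ∧ W s τ y

variable {R} in
lemma ForcesStep.imp {W W' : ZFSet → ZFSet → ZFSet → Prop} (h : R.ForcesStep W q σ x)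
    (hW : ∀ s ∈ R.Q, ∀ τ p, τ.pair p ∈ σ → ∀ y ∈ x, W s τ y → W' s τ y) :
    R.ForcesStep W' q σ x := by
  constructor
  · intro τ p hτp r hr hrq hrp
    obtain ⟨s, hs, hsr, y, hy, hw⟩ := h.1 τ p hτp r hr hrq hrp
    exact ⟨s, hs, hsr, y, hy, hW s hs τ p hτp y hy hw⟩
  · intro y hy r hr hrq
    obtain ⟨s, hs, hsr, τ, p, hτp, hsp, hw⟩ := h.2 y hy r hr hrq
    exact ⟨s, hs, hsr, τ, p, hτp, hsp, hW s hs τ p hτp y hy hw⟩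

variable {R} in
lemma ForcesStep.mono {W : ZFSet → ZFSet → ZFSet → Prop} (h : R.ForcesStep W q σ x)
    (hrq : R.le r q) : R.ForcesStep W r σ x :=
  ⟨fun τ p hτp s hs hsr => h.1 τ p hτp s hs (R.le_trans hsr hrq),
    fun y hy s hs hsr => h.2 y hy s hs (R.le_trans hsr hrq)⟩

/-- Every triple `⟨q, σ, x⟩` in `W` satisfies the recursion clause for `q ⊩ σ = x̌` relative to the
triples in `W`. -/
def IsPostFixed (W : ZFSet) : Prop :=
  ∀ q ∈ 𝕄.M, ∀ σ ∈ 𝕄.M, ∀ x ∈ 𝕄.M, q.pair (σ.pair x) ∈ W →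
    q ∈ R.Q ∧ R.ForcesStep (fun s τ y => s.pair (τ.pair y) ∈ W) q σ x

lemma definable_isPostFixed {k : ℕ} (i : Fin k) : Definable 𝕄 fun v => R.IsPostFixed (v i) := by
  simp only [IsPostFixed, ForcesStep]
  repeat' first | exact R.Q_mem | exact R.order_mem_classes | constructor

/-- The class of triples `⟨q, σ, x⟩` with `q ⊩ σ = x̌`. Since the recursion clause refers only to
elements of `x`, its greatest fixed point, the union of all post-fixed sets, is the relation it
defines by `∈`-recursion. -/
def forcing : Set ZFSet := {z | z ∈ 𝕄.M ∧ ∃ W ∈ 𝕄.M, R.IsPostFixed W ∧ z ∈ W}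

/-- `q ⊩ σ = x̌`. -/
abbrev ForcesEq (q σ x : ZFSet) : Prop := q.pair (σ.pair x) ∈ R.forcing

lemma forcing_mem_classes : R.forcing ∈ 𝕄.Cls :=
  GBModel.setOf_mem_classes (by
    repeat' first | exact R.definable_isPostFixed _ | constructor)

variable {R} in
lemma IsPostFixed.sUnion {B : ZFSet} (hB : ∀ W ∈ B, R.IsPostFixed W) :
    R.IsPostFixed (⋃₀ B) := by
  intro q hq σ hσ x hx h
  obtain ⟨W, hW, hmem⟩ := ZFSet.mem_sUnion.1 h
  obtain ⟨hqQ, hstep⟩ := hB W hW q hq σ hσ x hx hmem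
  exact ⟨hqQ, hstep.imp fun _ _ _ _ _ _ _ h => ZFSet.mem_sUnion_of_mem h hW⟩

variable {R} in
lemma IsPostFixed.insert {W : ZFSet} (hW : R.IsPostFixed W) (hq : q ∈ R.Q)
    (h : R.ForcesStep (fun s τ y => s.pair (τ.pair y) ∈ W) q σ x) :
    R.IsPostFixed (insert (q.pair (σ.pair x)) W) := by
  intro q' hq' σ' hσ' x' hx' hmem
  suffices q' ∈ R.Q ∧ R.ForcesStep (fun s τ y => s.pair (τ.pair y) ∈ W) q' σ' x' from
    ⟨this.1, this.2.imp fun _ _ _ _ _ _ _ h => ZFSet.mem_insert_of_mem _ h⟩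
  rcases ZFSet.mem_insert_iff.1 hmem with heq | hmem
  · obtain ⟨rfl, rfl, rfl⟩ : q' = q ∧ σ' = σ ∧ x' = x := by simpa [ZFSet.pair_inj] using heq
    exact ⟨hq, h⟩
  · exact hW q' hq' σ' hσ' x' hx' hmem

lemma exists_isPostFixed_superset {a : ZFSet} (ha : a ∈ 𝕄.M) :
    ∃ W ∈ 𝕄.M, R.IsPostFixed W ∧ ∀ z ∈ a, z ∈ R.forcing → z ∈ W := by
  obtain ⟨b, hb, hcover⟩ := GBModel.exists_collection (𝕄 := 𝕄)
    (P := fun z W => R.IsPostFixed W ∧ z ∈ W)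
    (GBModel.setOf_mem_classes (by
      repeat' first | exact R.definable_isPostFixed _ | constructor)) ha
  have hB : ZFSet.sep R.IsPostFixed b ∈ 𝕄.M := GBModel.sep_mem (R.definable_isPostFixed 0) hb
  refine ⟨_, 𝕄.sUnion_mem _ hB, IsPostFixed.sUnion fun W hW => (ZFSet.mem_sep.1 hW).2, ?_⟩
  rintro z hz ⟨-, hforced⟩
  obtain ⟨W, hWb, hW, hzW⟩ := hcover z hz hforced
  exact ZFSet.mem_sUnion_of_mem hzW (ZFSet.mem_sep.2 ⟨hWb, hW⟩)

variable {R}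

lemma ForcesEq.of_step (hq : q ∈ R.Q) (hσ : σ ∈ 𝕄.M) (hx : x ∈ 𝕄.M)
    (h : R.ForcesStep R.ForcesEq q σ x) : R.ForcesEq q σ x := by
  obtain ⟨W, hW, hpost, hsub⟩ := R.exists_isPostFixed_superset (GBModel.prod_mem R.Q_mem
    (GBModel.prod_mem (𝕄.sUnion_mem _ (𝕄.sUnion_mem σ hσ)) hx))
  have hstep : R.ForcesStep (fun s τ y => s.pair (τ.pair y) ∈ W) q σ x :=
    h.imp fun s hs τ p hτp y hy => hsub _ <| ZFSet.pair_mem_prod.2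
      ⟨hs, ZFSet.pair_mem_prod.2 ⟨mem_sUnion_sUnion_of_pair_mem hτp, hy⟩⟩
  have htriple : q.pair (σ.pair x) ∈ 𝕄.M :=
    GBModel.ordPair_mem (GBModel.mem_of_mem R.Q_mem hq) (GBModel.ordPair_mem hσ hx)
  exact ⟨htriple, _, GBModel.insert_mem htriple hW, hpost.insert hq hstep, ZFSet.mem_insert _ _⟩

lemma ForcesEq.name_mem (h : R.ForcesEq q σ x) : σ ∈ 𝕄.M :=
  GBModel.left_mem_of_ordPair_mem (GBModel.right_mem_of_ordPair_mem h.1)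

lemma ForcesEq.value_mem (h : R.ForcesEq q σ x) : x ∈ 𝕄.M :=
  GBModel.right_mem_of_ordPair_mem (GBModel.right_mem_of_ordPair_mem h.1)

lemma ForcesEq.cond_mem_and_step (h : R.ForcesEq q σ x) :
    q ∈ R.Q ∧ R.ForcesStep R.ForcesEq q σ x := by
  obtain ⟨hM, W, hW, hpost, hmem⟩ := id h
  obtain ⟨hq, hstep⟩ := hpost q (GBModel.left_mem_of_ordPair_mem hM) σ h.name_mem x h.value_mem hmem
  exact ⟨hq, hstep.imp fun _ _ _ _ _ _ _ h => ⟨GBModel.mem_of_mem hW h, W, hW, hpost, h⟩⟩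

lemma ForcesEq.mono (h : R.ForcesEq q σ x) (hr : r ∈ R.Q) (hrq : R.le r q) : R.ForcesEq r σ x :=
  .of_step hr h.name_mem h.value_mem (h.cond_mem_and_step.2.mono hrq)

lemma ForcesEq.unique {x' : ZFSet} (h : R.ForcesEq q σ x) (h' : R.ForcesEq q σ x') : x = x' := by
  induction x using ZFSet.inductionOn generalizing q σ x' with
  | _ x ih =>
    obtain ⟨hq, hstep⟩ := h.cond_mem_and_step
    obtain ⟨-, hstep'⟩ := h'.cond_mem_and_step
    ext y
    constructor
    · intro hy
      obtain ⟨s, hs, hsq, τ, p, hτp, hsp, hsy⟩ := hstep.2 y hy q hq (R.le_refl q hq)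
      obtain ⟨r, hr, hrs, y', hy', hry'⟩ := hstep'.1 τ p hτp s hs hsq hsp
      exact ih y hy (hsy.mono hr hrs) hry' ▸ hy'
    · intro hy
      obtain ⟨s, hs, hsq, τ, p, hτp, hsp, hsy⟩ := hstep'.2 y hy q hq (R.le_refl q hq)
      obtain ⟨r, hr, hrs, y', hy', hry'⟩ := hstep.1 τ p hτp s hs hsq hsp
      exact ih y' hy' hry' (hsy.mono hr hrs) ▸ hy'

variable (R) in
/-- `q` forces a particular `τ` to be an element of `σ` outside `x`. -/
def ForcesNotSubset (q σ x : ZFSet) : Prop :=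
  ∃ τ p, τ.pair p ∈ σ ∧ R.le q p ∧ ∀ s ∈ R.Q, R.le s q → ∀ y ∈ x, ¬ R.ForcesEq s τ y

variable (R) in
/-- `q` forces a particular `y ∈ x` not to be an element of `σ`. -/
def ForcesNotSupset (q σ x : ZFSet) : Prop :=
  ∃ y ∈ x, ∀ s ∈ R.Q, R.le s q → ∀ τ p, τ.pair p ∈ σ → R.le s p → ¬ R.ForcesEq s τ y

variable (R) in
/-- The class of conditions deciding, in one of three ways, whether `σ` takes the value `x`. -/
def deciding (σ x : ZFSet) : Set ZFSet :=
  {q | q ∈ 𝕄.M ∧ q ∈ R.Q ∧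
    (R.ForcesEq q σ x ∨ R.ForcesNotSubset q σ x ∨ R.ForcesNotSupset q σ x)}

lemma deciding_mem_classes (hσ : σ ∈ 𝕄.M) (hx : x ∈ 𝕄.M) : R.deciding σ x ∈ 𝕄.Cls :=
  GBModel.setOf_mem_classes (by
    simp only [ForcesNotSubset, ForcesNotSupset]
    repeat' first
      | assumption | exact R.Q_mem | exact R.order_mem_classes | exact R.forcing_mem_classes
      | exact GBModel.ordPair_mem hσ hx | constructor)

lemma exists_forcesNot_of_not_forcesEq (hσ : σ ∈ 𝕄.M) (hx : x ∈ 𝕄.M) (hq : q ∈ R.Q)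
    (h : ¬ R.ForcesEq q σ x) :
    ∃ r ∈ R.Q, R.le r q ∧ (R.ForcesNotSubset r σ x ∨ R.ForcesNotSupset r σ x) := by
  contrapose! h
  refine .of_step hq hσ hx ⟨fun τ p hτp r hr hrq hrp => ?_, fun y hy r hr hrq => ?_⟩
  · by_contra! hno
    exact (h r hr hrq).1 ⟨τ, p, hτp, hrp, hno⟩
  · by_contra! hno
    exact (h r hr hrq).2 ⟨y, hy, hno⟩

lemma denseIn_deciding (hσ : σ ∈ 𝕄.M) (hx : x ∈ 𝕄.M) :
    DenseIn R.Q.toSet R.le (R.deciding σ x) := by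
  refine ⟨fun q hq => hq.2.1, fun q hq => ?_⟩
  by_cases h : R.ForcesEq q σ x
  · exact ⟨q, ⟨GBModel.mem_of_mem R.Q_mem hq, hq, .inl h⟩, R.le_refl q hq⟩
  · obtain ⟨r, hr, hrq, hnot⟩ := exists_forcesNot_of_not_forcesEq hσ hx hq h
    exact ⟨r, ⟨GBModel.mem_of_mem R.Q_mem hr, hr, .inr hnot⟩, hrq⟩

lemma ForcesNotSubset.not_subset (hq : R.ForcesNotSubset q σ x)
    (hH : IsFilterOn R.Q.toSet R.le H) (hqH : q ∈ H) (hσ : IsName R.Q.toSet σ)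
    (truth : ∀ τ p, τ.pair p ∈ σ → nameEval H τ ∈ x → ∃ r ∈ H, R.ForcesEq r τ (nameEval H τ)) :
    ¬ nameEval H σ ⊆ x := by
  obtain ⟨hHQ, -, hup, hdir⟩ := hH
  obtain ⟨τ, p, hτp, hqp, hno⟩ := hq
  intro hsub
  have hpH : p ∈ H := hup q hqH p (hσ.of_pair_mem hτp).1 hqp
  have hτx : nameEval H τ ∈ x := hsub (mem_nameEval.2 ⟨τ, p, hpH, hτp, rfl⟩)
  obtain ⟨r, hrH, hr⟩ := truth τ p hτp hτx
  obtain ⟨s, hsH, hsq, hsr⟩ := hdir q hqH r hrH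
  exact hno s (hHQ hsH) hsq _ hτx (hr.mono (hHQ hsH) hsr)

lemma ForcesNotSupset.not_subset (hq : R.ForcesNotSupset q σ x)
    (hH : IsFilterOn R.Q.toSet R.le H) (hqH : q ∈ H)
    (truth : ∀ τ p, τ.pair p ∈ σ → nameEval H τ ∈ x → ∃ r ∈ H, R.ForcesEq r τ (nameEval H τ)) :
    ¬ x ⊆ nameEval H σ := by
  obtain ⟨hHQ, -, -, hdir⟩ := hH
  obtain ⟨y, hy, hno⟩ := hq
  intro hsub
  obtain ⟨τ, p, hpH, hτp, rfl⟩ := mem_nameEval.1 (hsub hy)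
  obtain ⟨r, hrH, hr⟩ := truth τ p hτp hy
  obtain ⟨u, huH, huq, hur⟩ := hdir q hqH r hrH
  obtain ⟨s, hsH, hsu, hsp⟩ := hdir u huH p hpH
  exact hno s (hHQ hsH) (R.le_trans hsu huq) τ p hτp hsp
    (hr.mono (hHQ hsH) (R.le_trans hsu hur))

theorem exists_forcesEq_nameEval (hH : IsGeneric 𝕄 R.Q.toSet R.le H) (hσ : IsName R.Q.toSet σ)
    (hσM : σ ∈ 𝕄.M) (hval : nameEval H σ ∈ 𝕄.M) :
    ∃ q ∈ H, R.ForcesEq q σ (nameEval H σ) := by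
  induction σ using name_induction with
  | _ σ ih =>
    have truth (τ p : ZFSet) (hτp : τ.pair p ∈ σ) (hτ : nameEval H τ ∈ nameEval H σ) :
        ∃ r ∈ H, R.ForcesEq r τ (nameEval H τ) :=
      ih τ p hτp (hσ.of_pair_mem hτp).2
        (GBModel.left_mem_of_ordPair_mem (GBModel.mem_of_mem hσM hτp))
        (GBModel.mem_of_mem hval hτ)
    obtain ⟨q, hqH, -, -, heq | hnot | hnot⟩ :=
      hH.2 _ (deciding_mem_classes hσM hval) (denseIn_deciding hσM hval)
    · exact ⟨q, hqH, heq⟩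
    · exact (hnot.not_subset hH.1 hqH hσ truth fun _ => id).elim
    · exact (hnot.not_subset hH.1 hqH truth fun _ => id).elim

variable (R) in
theorem exists_values_bound (hσ : IsName R.Q.toSet σ) (hσM : σ ∈ 𝕄.M) :
    ∃ A ∈ 𝕄.M, ∀ H, IsGeneric 𝕄 R.Q.toSet R.le H → nameEval H σ ∈ 𝕄.M → nameEval H σ ∈ A := by
  obtain ⟨A, hA, hbound⟩ := GBModel.exists_collection (𝕄 := 𝕄) (P := fun q x => R.ForcesEq q σ x)
    (GBModel.setOf_mem_classes (by
      repeat' first | assumption | exact R.forcing_mem_classes | constructor)) R.Q_mem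
  refine ⟨A, hA, fun H hH hval => ?_⟩
  obtain ⟨q, hqH, hq⟩ := exists_forcesEq_nameEval hH hσ hσM hval
  obtain ⟨x, hxA, hx⟩ := hbound q (hH.1.1 hqH) ⟨_, hval, hq⟩
  exact hq.unique hx ▸ hxA

end SetForcing

/-! ### Projections of generic filters -/

namespace ClassForcing

variable {𝕄 : GBModel} (F : ClassForcing 𝕄) {G : Set ZFSet} {Q X p q : ZFSet} {f : ZFSet → ZFSet}

/-- The order of a class forcing as a class of ordered pairs of conditions. -/
def order : Set ZFSet := {x | ∃ p ∈ F.P, ∃ q ∈ F.P, F.le p q ∧ x = p.pair q}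

lemma pair_mem_order : p.pair q ∈ F.order ↔ p ∈ F.P ∧ q ∈ F.P ∧ F.le p q := by
  constructor
  · rintro ⟨p', hp, q', hq, hle, heq⟩
    obtain ⟨rfl, rfl⟩ := ZFSet.pair_inj.1 heq
    exact ⟨hp, hq, hle⟩
  · rintro ⟨hp, hq, hle⟩
    exact ⟨p, hp, q, hq, hle, rfl⟩

/-- The set forcing with conditions `Q ⊆ P` and the order of `F`. -/
def restrict (hQ : Q ∈ 𝕄.M) (hQP : Q.toSet ⊆ F.P) : SetForcing 𝕄 where
  Q := Q
  order := F.order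
  Q_mem := hQ
  order_mem_classes := F.le_cls
  le_refl q hq := F.pair_mem_order.2 ⟨hQP hq, hQP hq, F.le_refl q (hQP hq)⟩
  le_trans hpq hqr := by
    obtain ⟨hp, -, hpq⟩ := F.pair_mem_order.1 hpq
    obtain ⟨-, hr, hqr⟩ := F.pair_mem_order.1 hqr
    exact F.pair_mem_order.2 ⟨hp, hr, F.le_trans _ _ _ hpq hqr⟩

/-- The upward closure of `f[G]` in `Q`. -/
def projectedFilter (Q : ZFSet) (f : ZFSet → ZFSet) (G : Set ZFSet) : Set ZFSet :=
  {q | q ∈ Q ∧ ∃ g ∈ G, F.le (f g) q}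

variable {F}

lemma isFilterOn_projectedFilter (hQ : Q ∈ 𝕄.M) (hQP : Q.toSet ⊆ F.P) (hone : F.one ∈ Q)
    (hf : IsProjectionResp F.P F.le F.one Q.toSet X.toSet f) (hG : IsFilterOn F.P F.le G) :
    IsFilterOn Q.toSet (F.restrict hQ hQP).le (F.projectedFilter Q f G) := by
  obtain ⟨hmaps, -, hmono, -⟩ := hf
  obtain ⟨hGP, ⟨g₀, hg₀⟩, -, hdir⟩ := hG
  have hfP {g : ZFSet} (hg : g ∈ G) : f g ∈ F.P := hQP (hmaps g (hGP hg))
  refine ⟨fun q hq => hq.1, ⟨F.one, hone, g₀, hg₀, F.le_one _ (hfP hg₀)⟩, ?_, ?_⟩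
  · rintro p ⟨-, g, hg, hgp⟩ q hq hpq
    exact ⟨hq, g, hg, F.le_trans _ _ _ hgp (F.pair_mem_order.1 hpq).2.2⟩
  · rintro p ⟨hp, g, hg, hgp⟩ q ⟨hq, g', hg', hgq⟩
    obtain ⟨r, hr, hrg, hrg'⟩ := hdir g hg g' hg'
    refine ⟨f r, ⟨hmaps r (hGP hr), r, hr, F.le_refl _ (hfP hr)⟩,
      F.pair_mem_order.2 ⟨hfP hr, hQP hp, ?_⟩, F.pair_mem_order.2 ⟨hfP hr, hQP hq, ?_⟩⟩
    · exact F.le_trans _ _ _ (hmono r (hGP hr) g (hGP hg) hrg) hgp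
    · exact F.le_trans _ _ _ (hmono r (hGP hr) g' (hGP hg') hrg') hgq

lemma setOf_exists_map_le_mem_classes {D : Set ZFSet} (hD : D ∈ 𝕄.Cls) (hDP : D ⊆ F.P)
    (hf : ∀ p ∈ F.P, f p ∈ F.P)
    (hgraph : {z | z ∈ 𝕄.M ∧ ∃ u ∈ F.P, z = u.pair (f u)} ∈ 𝕄.Cls) :
    {p | p ∈ F.P ∧ ∃ d ∈ D, F.le (f p) d} ∈ 𝕄.Cls := by
  set graph := {z | z ∈ 𝕄.M ∧ ∃ u ∈ F.P, z = u.pair (f u)}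
  have hclass : {p | p ∈ 𝕄.M ∧ ∃ v ∈ 𝕄.M, p.pair v ∈ graph ∧
      ∃ d ∈ 𝕄.M, d ∈ D ∧ v.pair d ∈ F.order} ∈ 𝕄.Cls :=
    GBModel.setOf_mem_classes (by repeat' first | assumption | exact F.le_cls | constructor)
  convert hclass using 1
  ext p
  constructor
  · rintro ⟨hp, d, hd, hpd⟩
    have hpM := 𝕄.classes_sub _ F.P_cls hp
    have hfpM := 𝕄.classes_sub _ F.P_cls (hf p hp)
    exact ⟨hpM, f p, hfpM, ⟨GBModel.ordPair_mem hpM hfpM, p, hp, rfl⟩, d,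
      𝕄.classes_sub D hD hd, hd, F.pair_mem_order.2 ⟨hf p hp, hDP hd, hpd⟩⟩
  · rintro ⟨-, v, -, ⟨-, u, hu, huv⟩, d, -, hd, hvd⟩
    obtain ⟨rfl, rfl⟩ := ZFSet.pair_inj.1 huv
    exact ⟨hu, d, hd, (F.pair_mem_order.1 hvd).2.2⟩

theorem isGeneric_projectedFilter (hQ : Q ∈ 𝕄.M) (hQP : Q.toSet ⊆ F.P) (hone : F.one ∈ Q)
    (hf : IsProjectionResp F.P F.le F.one Q.toSet X.toSet f)
    (hgraph : {z | z ∈ 𝕄.M ∧ ∃ u ∈ F.P, z = u.pair (f u)} ∈ 𝕄.Cls)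
    (hG : IsGeneric 𝕄 F.P F.le G) :
    IsGeneric 𝕄 Q.toSet (F.restrict hQ hQP).le (F.projectedFilter Q f G) := by
  refine ⟨isFilterOn_projectedFilter hQ hQP hone hf hG.1, fun D hD hdense => ?_⟩
  obtain ⟨hmaps, -, -, hlift, -⟩ := hf
  have hpreimage : DenseIn F.P F.le {p | p ∈ F.P ∧ ∃ d ∈ D, F.le (f p) d} := by
    refine ⟨fun p hp => hp.1, fun p hp => ?_⟩
    obtain ⟨d, hd, hdp⟩ := hdense.2 (f p) (hmaps p hp)
    obtain ⟨r, hr, hrp, hrd⟩ := hlift p hp d (hdense.1 hd) (F.pair_mem_order.1 hdp).2.2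
    exact ⟨r, ⟨hr, d, hd, hrd⟩, hrp⟩
  obtain ⟨g, hgG, -, d, hd, hgd⟩ := hG.2 _ (setOf_exists_map_le_mem_classes hD
    (hdense.1.trans hQP) (fun p hp => hQP (hmaps p hp)) hgraph) hpreimage
  exact ⟨d, ⟨hdense.1 hd, g, hgG, hgd⟩, hd⟩

lemma mem_projectedFilter_iff (hQP : Q.toSet ⊆ F.P) (hXQ : X ⊆ Q)
    (hf : IsProjectionResp F.P F.le F.one Q.toSet X.toSet f) (hG : IsFilterOn F.P F.le G)
    (hp : p ∈ X) : p ∈ F.projectedFilter Q f G ↔ p ∈ G := by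
  obtain ⟨-, -, -, -, hreflect, hid⟩ := hf
  obtain ⟨hGP, -, hup, -⟩ := hG
  constructor
  · rintro ⟨hpQ, g, hg, hgp⟩
    exact hup g hg p (hQP hpQ) (hreflect p hp g (hGP hg) hgp)
  · intro hpG
    exact ⟨hXQ hp, p, hpG, (hid p hp).symm ▸ F.le_refl p (hGP hpG)⟩

lemma graph_mem_classes_of_section {Pi : Set ZFSet} (hPi : Pi ∈ 𝕄.Cls) {y : ZFSet}
    (hX : X ∈ 𝕄.M) (hy : y ∈ 𝕄.M)
    (hf : ∀ u ∈ F.P, ∀ v, f u = v ↔ X.pair (y.pair (u.pair v)) ∈ Pi) :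
    {z | z ∈ 𝕄.M ∧ ∃ u ∈ F.P, z = u.pair (f u)} ∈ 𝕄.Cls := by
  have hclass : {z | z ∈ 𝕄.M ∧ ∃ u ∈ 𝕄.M, u ∈ F.P ∧
      ∃ v ∈ 𝕄.M, X.pair (y.pair (u.pair v)) ∈ Pi ∧ z = u.pair v} ∈ 𝕄.Cls :=
    GBModel.setOf_mem_classes (by repeat' first | assumption | exact F.P_cls | constructor)
  convert hclass using 1
  ext z
  refine and_congr_right fun hz => ⟨?_, ?_⟩
  · rintro ⟨u, hu, rfl⟩
    exact ⟨u, GBModel.left_mem_of_ordPair_mem hz, hu, f u, GBModel.right_mem_of_ordPair_mem hz,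
      (hf u hu _).1 rfl, rfl⟩
  · rintro ⟨u, -, hu, v, -, hv, rfl⟩
    exact ⟨u, hu, by rw [(hf u hu v).2 hv]⟩

end ClassForcing

/-- If `ℙ` is a notion of class forcing for `𝕄 ⊨ GB⁻` that is approachable
by projections, then `ℙ` has bounded names. -/
theorem approachable_implies_bounded_names
    (𝕄 : GBModel) (F : ClassForcing 𝕄) (h : ApproachableByProjections 𝕄 F) :
    HasBoundedNames 𝕄 F := by
  intro σ hσM hσ
  obtain ⟨Pi, hPi, hproj⟩ := h
  obtain ⟨t, htM, ht, hσt⟩ := GBModel.exists_isTransitive_mem hσM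
  set X : ZFSet := ZFSet.sep (· ∈ F.P) t
  have hXM : X ∈ 𝕄.M :=
    GBModel.sep_mem (by repeat' first | exact F.P_cls | constructor) htM
  have hσX : IsName X.toSet σ :=
    hσ.of_mem_isTransitive ht hσt fun p hpt hpP => ZFSet.mem_sep.2 ⟨hpt, hpP⟩
  obtain ⟨y, hyM, Q, hQM, hQP, hXQ, hone, f, hsection, hf⟩ :=
    hproj X hXM fun p hp => (ZFSet.mem_sep.1 hp).2
  have hσQ : IsName Q.toSet σ := hσX.of_mem_isTransitive ht hσt fun p _ hp => hXQ p hp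
  obtain ⟨A, hA, hbound⟩ := (F.restrict hQM hQP).exists_values_bound hσQ hσM
  refine ⟨A, hA, ?_⟩
  rintro _ ⟨⟨G, hG, rfl⟩, hval⟩
  have hH := ClassForcing.isGeneric_projectedFilter hQM hQP hone hf
    (ClassForcing.graph_mem_classes_of_section hPi hXM hyM hsection) hG
  have heval : nameEval (F.projectedFilter Q f G) σ = nameEval G σ :=
    hσX.nameEval_congr fun p hp => ClassForcing.mem_projectedFilter_iff hQP hXQ hf hG.1 hp
  exact heval ▸ hbound _ hH (heval ▸ hval)

end CF
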